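/- arXiv:1812.03452 — 2 statements merged into one kernel-verified Lean document; each statement's English description precedes it below -/
import Mathlib

section
/- Let G be a group and i an integer such that H^i(G, ZG) and H^{i-1}(G, ZG) are both finitely generated abelian groups. Let A be a ZG-module whose underlying abelian group is finite. Then Ext^i_{ZG}(A, ZG) is a finitely generated abelian group. -/
/-
Cover the finite module `A` by the permutation module on its own elements: this gives a short exact
sequence `0 → F₁ → F₀ → A → 0` with `F₁`, `F₀` finitely generated and free over `ℤ`. For such a
lattice `F`, tensoring with `F` is left adjoint to `Hom_ℤ(F, -)` and both functors are exact, so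
`Ext^n(F, ℤG) = H^n(G, Hom_ℤ(F, ℤG))`; and `φ ↦ ∑ h, (φ (h • v))_h h` untwists the diagonal action,
which makes `Hom_ℤ(F, ℤG)` a direct summand of a finite sum of copies of `ℤG`. Hence
`Ext^{i-1}(F₁, ℤG)` and `Ext^i(F₀, ℤG)` are finitely generated, and so is `Ext^i(A, ℤG)`, which sits
between them in the long exact sequence. Untwisting over `G` itself replaces the passage to a
finite-index subgroup acting trivially on `A`.
-/

open CategoryTheory Opposite

/-- `Ext^i_{ℤG}(A, ℤG)` as an abelian group, where `ℤG = MonoidAlgebra ℤ G` acts on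
itself by left multiplication. -/
noncomputable def extZG (G : Type) [Group G] (i : ℕ)
    (A : Type) [AddCommGroup A] [Module (MonoidAlgebra ℤ G) A] : ModuleCat ℤ :=
  ((Ext ℤ (ModuleCat (MonoidAlgebra ℤ G)) i).obj
    (op (ModuleCat.of (MonoidAlgebra ℤ G) A))).obj
    (ModuleCat.of (MonoidAlgebra ℤ G) (MonoidAlgebra ℤ G))

section ProjectiveExt

universe w v u

variable {C : Type u} [Category.{v} C] [Abelian C] [HasExt.{w} C] {X : C}

open CochainComplex HomComplex in
theorem extMk_zero_degree_eq_zero_iff (P : ProjectiveResolution X) {Y : C}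
    (f : P.complex.X 0 ⟶ Y) (hf : P.complex.d 1 0 ≫ f = 0) :
    P.extMk f 1 rfl hf = 0 ↔ f = 0 := by
  simp only [← P.extEquivCohomologyClass.apply_eq_iff_eq, P.extEquivCohomologyClass_extMk,
    P.extEquivCohomologyClass_zero, CohomologyClass.mk_eq_zero_iff]
  rw [Cocycle.toSingleMk_mem_coboundaries_iff _ _ _ _ _ 1 (by simp)]
  have := P.cochainComplex.isZero_of_isStrictlyLE 0 1
  constructor
  · rintro ⟨g, hg⟩
    rw [this.eq_of_src g 0] at hg
    simpa using hg.symm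
  · rintro rfl
    exact ⟨0, by simp⟩

theorem extMk_eq_zero_iff_exists_prev (P : ProjectiveResolution X) {Y : C} {n m : ℕ}
    (f : P.complex.X n ⟶ Y) (hm : n + 1 = m) (hf : P.complex.d m n ≫ f = 0) :
    P.extMk f m hm hf = 0 ↔ ∃ g, P.complex.d n ((ComplexShape.up ℕ).prev n) ≫ g = f := by
  subst hm
  cases n with
  | zero =>
    rw [extMk_zero_degree_eq_zero_iff]
    simp [eq_comm]
  | succ p => exact P.extMk_eq_zero_iff f _ rfl hf _ (by simp)

variable (k : Type*) [Ring k] [Linear k C]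

/-- The map sending a cocycle of `Hom(P, Y)`, for a projective resolution `P` of `X`, to its class
in `Ext`. The cocycles are the concrete kernel of linear maps, so that classes can be computed on
elements. -/
noncomputable def cocyclesToExt (P : ProjectiveResolution X) (Y : C) (n : ℕ) :
    LinearMap.ker ((P.complex.linearYonedaObj k Y).sc n).g.hom →+ Abelian.Ext X Y n :=
  AddMonoidHom.mk' (fun f => P.extMk f.1 _ (CochainComplex.next ℕ n).symm f.2)
    fun _ _ => (P.add_extMk _ _ _ _ _ _).symm

theorem cocyclesToExt_surjective (P : ProjectiveResolution X) (Y : C) (n : ℕ) :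
    Function.Surjective (cocyclesToExt k P Y n) := by
  intro α
  obtain ⟨f, hf, rfl⟩ := P.extMk_surjective α _ (CochainComplex.next ℕ n).symm
  exact ⟨⟨f, hf⟩, rfl⟩

theorem ker_cocyclesToExt (P : ProjectiveResolution X) (Y : C) (n : ℕ) :
    (cocyclesToExt k P Y n).ker = (LinearMap.range
      ((P.complex.linearYonedaObj k Y).sc n).moduleCatToCycles).toAddSubgroup := by
  ext f
  refine (extMk_eq_zero_iff_exists_prev P f.1 (CochainComplex.next ℕ n).symm f.2).trans ?_
  exact exists_congr fun _ => ⟨fun h => Subtype.ext h, fun h => congrArg Subtype.val h⟩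

/-- `Ext` in the sense of morphisms of the derived category, computed by a projective
resolution. -/
noncomputable def linearYonedaHomologyAddEquivExt (P : ProjectiveResolution X) (Y : C) (n : ℕ) :
    (P.complex.linearYonedaObj k Y).homology n ≃+ Abelian.Ext X Y n :=
  (ShortComplex.moduleCatHomologyIso _).toLinearEquiv.toAddEquiv.trans <|
    (QuotientAddGroup.quotientAddEquivOfEq (ker_cocyclesToExt k P Y n).symm).trans <|
      QuotientAddGroup.quotientKerEquivOfSurjective _ (cocyclesToExt_surjective k P Y n)

/-- Comparison of Mathlib's two constructions of `Ext`: left derived functors of `Hom`, and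
morphisms in the derived category. -/
noncomputable def derivedExtAddEquivExt [EnoughProjectives C] (X Y : C) (n : ℕ) :
    ((Ext k C n).obj (op X)).obj Y ≃+ Abelian.Ext X Y n :=
  ((projectiveResolution X).isoExt (R := k) n Y).toLinearEquiv.toAddEquiv.trans
    (linearYonedaHomologyAddEquivExt k _ Y n)

end ProjectiveExt

section Adjunction

universe w w' v u u'

variable {C : Type u} [Category.{v} C] [Abelian C] [EnoughProjectives C] [HasExt.{w} C]
  {D : Type u'} [Category.{v} D] [Abelian D] [HasExt.{w'} D]
  {L : C ⥤ D} {R : D ⥤ C} [L.Additive]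

/-- The adjunction isomorphism `Hom(K, R Y) ≅ Hom(L K, Y)` of cochain complexes. -/
noncomputable def linearYonedaObjIsoOfAdjunction (adj : L ⊣ R) (K : ChainComplex C ℕ) (Y : D) :
    K.linearYonedaObj ℤ (R.obj Y) ≅
      ChainComplex.linearYonedaObj ((L.mapHomologicalComplex _).obj K) ℤ Y :=
  HomologicalComplex.Hom.isoOfComponents
    (fun n => (adj.homAddEquiv (K.X n) Y).symm.toIntLinearEquiv.toModuleIso)
    fun m n _ => by
      ext f
      exact (adj.homEquiv_naturality_left_symm (K.d n m) f).symm

/-- The adjunction isomorphism on `Ext`, for an adjunction between exact functors; the right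
adjoint need only preserve epimorphisms, so that the left one preserves projectives. -/
noncomputable def extAddEquivOfAdjunction (adj : L ⊣ R) [L.PreservesHomology]
    [R.PreservesEpimorphisms] (X : C) (Y : D) (n : ℕ) :
    Abelian.Ext (L.obj X) Y n ≃+ Abelian.Ext X (R.obj Y) n :=
  have : L.PreservesProjectiveObjects := ⟨fun hP => adj.map_projective _ hP⟩
  let P := projectiveResolution X
  (linearYonedaHomologyAddEquivExt ℤ (L.mapProjectiveResolution P) Y n).symm.trans <|
    (HomologicalComplex.homologyMapIso
      (linearYonedaObjIsoOfAdjunction adj P.complex Y) n).symm.toLinearEquiv.toAddEquiv.trans <|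
      linearYonedaHomologyAddEquivExt ℤ P (R.obj Y) n

end Adjunction

section FG

theorem addGroupFG_of_exact {A B C : Type*} [AddCommGroup A] [AddCommGroup B] [AddCommGroup C]
    (f : A →+ B) (g : B →+ C) (hfg : ∀ b, g b = 0 → ∃ a, f a = b)
    (hA : AddGroup.FG A) (hC : AddGroup.FG C) : AddGroup.FG B := by
  rw [← Module.Finite.iff_addGroup_fg] at hA hC ⊢
  have : IsNoetherian ℤ g.toIntLinearMap.ker :=
    isNoetherian_of_le (t := f.toIntLinearMap.range) hfg
  have : IsNoetherian ℤ B :=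
    isNoetherian_of_range_eq_ker g.toIntLinearMap.ker.subtype g.toIntLinearMap
      (Submodule.range_subtype _)
  infer_instance

theorem addGroupFG_of_addEquiv {A B : Type*} [AddCommGroup A] [AddCommGroup B] (e : A ≃+ B)
    (hA : AddGroup.FG A) : AddGroup.FG B :=
  AddGroup.fg_of_surjective (hG := hA) (f := e.toAddMonoidHom) e.surjective

universe w v u

variable {C : Type u} [Category.{v} C] [Abelian C] [HasExt.{w} C]

theorem addGroupFG_ext_X₃_of_shortExact {S : ShortComplex C} (hS : S.ShortExact) (Y : C) (n : ℕ)
    (h₁ : AddGroup.FG (Abelian.Ext S.X₁ Y (n - 1))) (h₂ : AddGroup.FG (Abelian.Ext S.X₂ Y n)) :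
    AddGroup.FG (Abelian.Ext S.X₃ Y n) := by
  let π := (Abelian.Ext.mk₀ S.g).precomp Y (zero_add n)
  cases n with
  | zero =>
    have hπ : Function.Injective π :=
      have := hS.epi_g
      Abelian.Ext.precomp_mk₀_injective_of_epi Y S.g
    exact addGroupFG_of_exact (0 : Unit →+ _) π
      (fun b hb => ⟨0, (hπ (hb.trans π.map_zero.symm)).symm⟩) inferInstance h₂
  | succ m =>
    exact addGroupFG_of_exact (hS.extClass.precomp Y (add_comm 1 m)) π
      (fun b hb => Abelian.Ext.contravariant_sequence_exact₃ hS Y b hb (add_comm 1 m)) h₁ h₂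

theorem addGroupFG_ext_of_sum_comp_eq_id {κ : Type*} [Fintype κ] {W Z : C}
    (p : κ → (Z ⟶ W)) (q : κ → (W ⟶ Z)) (hpq : ∑ k, p k ≫ q k = 𝟙 Z) (X : C) (n : ℕ)
    (hW : AddGroup.FG (Abelian.Ext X W n)) : AddGroup.FG (Abelian.Ext X Z n) := by
  let Φ : (κ → Abelian.Ext X W n) →+ Abelian.Ext X Z n :=
    ∑ k, ((Abelian.Ext.mk₀ (q k)).postcomp X (add_zero n)).comp (Pi.evalAddMonoidHom _ k)
  have hΦ : Function.Surjective Φ := fun α => by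
    refine ⟨fun k => α.comp (Abelian.Ext.mk₀ (p k)) (add_zero n), ?_⟩
    calc Φ (fun k => α.comp (Abelian.Ext.mk₀ (p k)) (add_zero n))
        = ∑ k, α.comp (Abelian.Ext.mk₀ (p k ≫ q k)) (add_zero n) := by simp [Φ]
      _ = α := by rw [← Abelian.Ext.comp_sum, ← Abelian.Ext.mk₀_sum, hpq, α.comp_mk₀_id]
  rw [← Module.Finite.iff_addGroup_fg] at hW
  have : AddGroup.FG (κ → Abelian.Ext X W n) := Module.Finite.iff_addGroup_fg.1 inferInstance
  exact AddGroup.fg_of_surjective hΦ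

end FG

section Iso

universe w v u

variable {C : Type u} [Category.{v} C] [Abelian C] [HasExt.{w} C]

/-- Invariance of `Ext` under an isomorphism of its first argument. -/
noncomputable def extAddEquivOfIso {X X' : C} (e : X ≅ X') (Y : C) (n : ℕ) :
    Abelian.Ext X Y n ≃+ Abelian.Ext X' Y n :=
  (((Abelian.extFunctor n).mapIso e.symm.op).app Y).addCommGroupIsoToAddEquiv

end Iso

section RepExt

universe u

variable {R G : Type u} [CommRing R] [Group G]

instance : HasExt.{u} (Rep.{u} R G) := hasExt_of_enoughProjectives _

/-- Group cohomology as `Ext` out of the trivial representation. -/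
noncomputable def groupCohomologyAddEquivExt (W : Rep.{u} R G) (n : ℕ) :
    groupCohomology W n ≃+ Abelian.Ext (Rep.trivial R G R) W n :=
  (groupCohomologyIsoExt W n).toLinearEquiv.toAddEquiv.trans (derivedExtAddEquivExt R _ W n)

theorem tensorLeft_preservesMonomorphisms (F : Rep.{u} R G) [Module.Flat R F.V] :
    (MonoidalCategory.tensorLeft F).PreservesMonomorphisms where
  preserves f hf := by
    rw [Rep.mono_iff_injective] at hf ⊢
    exact Module.Flat.lTensor_preserves_injective_linearMap f.hom.toLinearMap hf

theorem ihom_preservesEpimorphisms (F : Rep.{u} R G) [Module.Projective R F.V] :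
    (ihom F).PreservesEpimorphisms where
  preserves f hf := by
    rw [Rep.epi_iff_surjective] at hf ⊢
    exact fun φ => Module.projective_lifting_property (P := F.V) f.hom.toLinearMap φ hf

open MonoidalCategory in
/-- `Ext^n(F, W) = Ext^n(R, Hom_R(F, W))` for a representation `F` that is projective over `R`. -/
noncomputable def extAddEquivExtTrivialIhom (F W : Rep.{u} R G) [Module.Projective R F.V]
    (n : ℕ) :
    Abelian.Ext F W n ≃+ Abelian.Ext (Rep.trivial R G R) ((Rep.ihom F).obj W) n :=
  have := tensorLeft_preservesMonomorphisms F
  have := ihom_preservesEpimorphisms F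
  have : (tensorLeft F).PreservesHomology :=
    Functor.preservesHomology_of_preservesMonos_and_cokernels _
  (extAddEquivOfIso (ρ_ F).symm W n).trans
    (extAddEquivOfAdjunction (ihom.adjunction F) (Rep.trivial R G R) W n)

/-- `Ext^n(M, R[G])` over the group ring `R[G]`, computed in the category of representations. The
linear structure over `k` enters the construction of `Ext` but not its additive group. -/
noncomputable def derivedExtAddEquivExtRep (k : Type*) [Ring k]
    [Linear k (ModuleCat.{u} (MonoidAlgebra R G))] (M : ModuleCat.{u} (MonoidAlgebra R G)) (n : ℕ) :
    ((Ext k (ModuleCat (MonoidAlgebra R G)) n).obj (op M)).obj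
        (ModuleCat.of (MonoidAlgebra R G) (MonoidAlgebra R G)) ≃+
      Abelian.Ext (Rep.ofModuleMonoidAlgebra.obj M) (Rep.leftRegular R G) n :=
  have : (Rep.ofModuleMonoidAlgebra (k := R) (G := G)).Additive :=
    Functor.additive_of_preserves_binary_products _
  let e : ModuleCat.of (MonoidAlgebra R G) (MonoidAlgebra R G) ≅
      Rep.toModuleMonoidAlgebra.obj (Rep.leftRegular R G) :=
    Representation.ofMulActionSelfAsModuleEquiv.symm.toModuleIso
  (((Ext k _ n).obj (op M)).mapIso e).toLinearEquiv.toAddEquiv.trans <|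
    (derivedExtAddEquivExt k M _ n).trans
      (extAddEquivOfAdjunction (L := Rep.ofModuleMonoidAlgebra) (R := Rep.toModuleMonoidAlgebra)
        Rep.equivalenceModuleMonoidAlgebra.symm.toAdjunction M _ n).symm

end RepExt

theorem exists_sum_dual_smul_eq (R V : Type*) [CommRing R] [AddCommGroup V] [Module R V]
    [Module.Finite R V] [Module.Projective R V] :
    ∃ (n : ℕ) (b : Fin n → V) (ξ : Fin n → Module.Dual R V), ∀ v, ∑ k, ξ k v • b k = v := by
  obtain ⟨n, f, g, -, -, hfg⟩ := Module.Finite.exists_comp_eq_id_of_projective R V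
  refine ⟨n, fun k => f (Pi.single k 1), fun k => LinearMap.proj k ∘ₗ g, fun v => ?_⟩
  calc ∑ k, g v k • f (Pi.single k 1) = f (∑ k, g v k • Pi.single k 1) := by
        simp only [map_sum, map_smul]
    _ = f (g v) := by rw [← pi_eq_sum_univ' (g v)]
    _ = v := LinearMap.congr_fun hfg v

section Untwisting

open Representation

variable {R G V : Type*} [CommRing R] [Group G] [AddCommGroup V] [Module R V]

theorem exists_finset_coeff_eq_zero [Module.Finite R V] {α : Type*}
    (φ : V →ₗ[R] MonoidAlgebra R α) : ∃ s : Finset α, ∀ a ∉ s, ∀ v, (φ v).coeff a = 0 := by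
  classical
  obtain ⟨S, hS⟩ := Module.Finite.fg_top (R := R) (M := V)
  refine ⟨S.biUnion fun v => (φ v).coeff.support, fun a ha => ?_⟩
  have hφ : Finsupp.lapply a ∘ₗ (MonoidAlgebra.coeffLinearEquiv R).toLinearMap ∘ₗ φ = 0 :=
    LinearMap.ext_on hS fun v hv => by
      simpa using fun h => ha (Finset.mem_biUnion.2 ⟨v, hv, Finsupp.mem_support_iff.2 h⟩)
  exact fun v => LinearMap.congr_fun hφ v

variable (ρ : Representation R G V)

theorem finite_support_coeff_orbit [Module.Finite R V] (v : V) (φ : V →ₗ[R] MonoidAlgebra R G) :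
    (Function.support fun h => (φ (ρ h v)).coeff h).Finite := by
  obtain ⟨s, hs⟩ := exists_finset_coeff_eq_zero φ
  exact s.finite_toSet.subset fun h hh => by_contra fun hc => hh (hs h hc _)

/-- The intertwining map `φ ↦ ∑ h, (φ (h • v))_h h` from `Hom_R(V, R[G])` to `R[G]`; the sum is
finite because the values of `φ` are supported on a common finite set. -/
noncomputable def orbitEval [Module.Finite R V] (v : V) :
    (linHom ρ (leftRegular R G)).IntertwiningMap (leftRegular R G) where
  toFun φ := .ofCoeff (.ofSupportFinite _ (finite_support_coeff_orbit ρ v φ))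
  map_add' φ ψ := by ext h; simp [Finsupp.ofSupportFinite_coe]
  map_smul' c φ := by ext h; simp [Finsupp.ofSupportFinite_coe]
  isIntertwining' g := by
    ext φ h
    simp [Finsupp.ofSupportFinite_coe]

@[simp]
theorem coeff_orbitEval [Module.Finite R V] (v : V) (φ : V →ₗ[R] MonoidAlgebra R G) (h : G) :
    (orbitEval ρ v φ).coeff h = (φ (ρ h v)).coeff h := rfl

/-- The intertwining map `R[G] → Hom_R(V, R[G])` with `w ↦ (v ↦ ∑ h, w_h ξ(h⁻¹ • v) h)`: the
counterpart of `orbitEval` for a linear form `ξ`. -/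
noncomputable def orbitCoeval (ξ : Module.Dual R V) :
    (leftRegular R G).IntertwiningMap (linHom ρ (leftRegular R G)) where
  toLinearMap := LinearMap.mk₂ R
    (fun w v => .ofCoeff (.onFinset w.coeff.support (fun h => w.coeff h * ξ (ρ h⁻¹ v))
      fun _ hh => Finsupp.mem_support_iff.2 (left_ne_zero_of_mul hh)))
    (by intros; ext h; simp [add_mul])
    (by intros; ext h; simp [mul_assoc])
    (by intros; ext h; simp [mul_add])
    (by intros; ext h; simp [mul_left_comm])
  isIntertwining' g := by
    refine LinearMap.ext fun w => LinearMap.ext fun v => ?_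
    ext h
    simp

@[simp]
theorem coeff_orbitCoeval (ξ : Module.Dual R V) (w : MonoidAlgebra R G) (v : V) (h : G) :
    (orbitCoeval ρ ξ w v).coeff h = w.coeff h * ξ (ρ h⁻¹ v) := rfl

theorem sum_orbitCoeval_orbitEval [Module.Finite R V] {κ : Type*} [Fintype κ] {b : κ → V}
    {ξ : κ → Module.Dual R V} (hb : ∀ v, ∑ k, ξ k v • b k = v) (φ : V →ₗ[R] MonoidAlgebra R G) :
    ∑ k, orbitCoeval ρ (ξ k) (orbitEval ρ (b k) φ) = φ := by
  ext v h
  have hv : ∑ k, ξ k (ρ h⁻¹ v) • ρ h (b k) = v := by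
    simpa only [map_sum, map_smul, self_inv_apply] using congrArg (ρ h) (hb (ρ h⁻¹ v))
  calc ((∑ k, orbitCoeval ρ (ξ k) (orbitEval ρ (b k) φ)) v).coeff h
      = ∑ k, (φ (ρ h (b k))).coeff h * ξ k (ρ h⁻¹ v) := by
        simp only [LinearMap.sum_apply, MonoidAlgebra.coeff_sum, Finsupp.finsetSum_apply,
          coeff_orbitCoeval, coeff_orbitEval]
    _ = (φ (∑ k, ξ k (ρ h⁻¹ v) • ρ h (b k))).coeff h := by
        simp [MonoidAlgebra.coeff_sum, Finsupp.finsetSum_apply, mul_comm]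
    _ = (φ v).coeff h := by rw [hv]

theorem exists_sum_comp_eq_id_ihom_leftRegular (F : Rep R G) [Module.Finite R F.V]
    [Module.Projective R F.V] :
    ∃ (n : ℕ) (p : Fin n → ((Rep.ihom F).obj (Rep.leftRegular R G) ⟶ Rep.leftRegular R G))
      (q : Fin n → (Rep.leftRegular R G ⟶ (Rep.ihom F).obj (Rep.leftRegular R G))),
      ∑ k, p k ≫ q k = 𝟙 _ := by
  obtain ⟨n, b, ξ, hb⟩ := exists_sum_dual_smul_eq R F.V
  refine ⟨n, fun k => Rep.ofHom (orbitEval F.ρ (b k)),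
    fun k => Rep.ofHom (orbitCoeval F.ρ (ξ k)), ?_⟩
  apply Rep.hom_ext
  rw [Rep.sum_hom]
  refine Representation.IntertwiningMap.ext (LinearMap.ext fun φ => ?_)
  rw [Representation.IntertwiningMap.toLinearMap_sum]
  exact (LinearMap.sum_apply _ _ _).trans (sum_orbitCoeval_orbitEval F.ρ hb φ)

end Untwisting

section PermutationCover

universe u

variable {R G : Type u} [CommRing R] [Group G] (A : Rep.{u} R G)

/-- The permutation representation on the free module over the underlying set of `A`. -/
noncomputable def permutationCover : Rep.{u} R G :=
  Rep.of (X := A.V →₀ R)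
    { toFun g := Finsupp.lmapDomain R R (A.ρ g)
      map_one' := by ext; simp
      map_mul' g h := by ext; simp }

/-- The surjection of the permutation representation onto `A` sending each basis element to the
element of `A` that it stands for. -/
noncomputable def permutationCoverMap : permutationCover A ⟶ A :=
  Rep.ofHom
    { Finsupp.linearCombination R (id : A.V → A.V) with
      isIntertwining' g := by
        refine Finsupp.lhom_ext' fun a => LinearMap.ext_ring ?_
        simp }

instance : Module.Free R (permutationCover A).V :=
  inferInstanceAs (Module.Free R (A.V →₀ R))

instance [Finite A.V] : Module.Finite R (permutationCover A).V :=
  inferInstanceAs (Module.Finite R (A.V →₀ R))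

instance : Epi (permutationCoverMap A) := by
  rw [Rep.epi_iff_surjective]
  exact fun a => ⟨Finsupp.single a 1, (Finsupp.linearCombination_single R 1 a).trans (one_smul R a)⟩

theorem finite_and_free_of_mono [IsDomain R] [IsPrincipalIdealRing R] {F₁ F₀ : Rep.{u} R G}
    (f : F₁ ⟶ F₀) [Mono f] [Module.Finite R F₀.V] [Module.Free R F₀.V] :
    Module.Finite R F₁.V ∧ Module.Free R F₁.V := by
  let e := LinearEquiv.ofInjective f.hom.toLinearMap ((Rep.mono_iff_injective f).1 inferInstance)
  exact ⟨Module.Finite.equiv e.symm, Module.Free.of_equiv e.symm⟩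

end PermutationCover

theorem shortExact_kernel {C : Type*} [Category* C] [Abelian C] {X Y : C} (g : X ⟶ Y) [Epi g] :
    (ShortComplex.mk (Limits.kernel.ι g) g (Limits.kernel.condition g)).ShortExact where
  exact := ShortComplex.exact_of_f_is_kernel _ (Limits.kernelIsKernel g)

section GroupRing

universe u

variable {R G : Type u} [CommRing R] [Group G]

theorem addGroupFG_ext_leftRegular_of_projective (F : Rep.{u} R G) [Module.Finite R F.V]
    [Module.Projective R F.V] (n : ℕ)
    (h : AddGroup.FG (groupCohomology (Rep.leftRegular R G) n)) :
    AddGroup.FG (Abelian.Ext F (Rep.leftRegular R G) n) := by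
  obtain ⟨_, p, q, hpq⟩ := exists_sum_comp_eq_id_ihom_leftRegular F
  have hExt := addGroupFG_of_addEquiv (groupCohomologyAddEquivExt _ n) h
  exact addGroupFG_of_addEquiv (extAddEquivExtTrivialIhom F _ n).symm
    (addGroupFG_ext_of_sum_comp_eq_id p q hpq _ n hExt)

theorem addGroupFG_ext_leftRegular_of_finite [IsDomain R] [IsPrincipalIdealRing R]
    (A : Rep.{u} R G) [Finite A.V] (n : ℕ)
    (h : AddGroup.FG (groupCohomology (Rep.leftRegular R G) n))
    (h' : AddGroup.FG (groupCohomology (Rep.leftRegular R G) (n - 1))) :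
    AddGroup.FG (Abelian.Ext A (Rep.leftRegular R G) n) := by
  let π := permutationCoverMap A
  obtain ⟨_, _⟩ := finite_and_free_of_mono (Limits.kernel.ι π)
  exact addGroupFG_ext_X₃_of_shortExact (shortExact_kernel π) _ n
    (addGroupFG_ext_leftRegular_of_projective (Limits.kernel π) (n - 1) h')
    (addGroupFG_ext_leftRegular_of_projective (permutationCover A) n h)

theorem stmt3_general [IsDomain R] [IsPrincipalIdealRing R] (k : Type*) [Ring k]
    [Linear k (ModuleCat.{u} (MonoidAlgebra R G))] (i : ℕ)
    (h1 : AddGroup.FG (groupCohomology (Rep.leftRegular R G) i))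
    (h2 : AddGroup.FG (groupCohomology (Rep.leftRegular R G) (i - 1)))
    (A : ModuleCat.{u} (MonoidAlgebra R G)) [Finite A] :
    AddGroup.FG (((Ext k (ModuleCat (MonoidAlgebra R G)) i).obj (op A)).obj
      (ModuleCat.of (MonoidAlgebra R G) (MonoidAlgebra R G))) :=
  have : Finite (Rep.ofModuleMonoidAlgebra.obj A).V := inferInstanceAs (Finite A)
  addGroupFG_of_addEquiv (derivedExtAddEquivExtRep k A i).symm
    (addGroupFG_ext_leftRegular_of_finite _ i h1 h2)

end GroupRing

/-- If `H^i(G, ℤG)` and `H^{i-1}(G, ℤG)` are finitely generated abelian groups and `A` is a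
`ℤG`-module whose underlying abelian group is finite, then `Ext^i_{ℤG}(A, ℤG)` is a finitely
generated abelian group. -/
theorem stmt3 (G : Type) [Group G] (i : ℕ)
    (h1 : AddGroup.FG (groupCohomology (Rep.ofMulAction ℤ G G) i))
    (h2 : AddGroup.FG (groupCohomology (Rep.ofMulAction ℤ G G) (i - 1)))
    (A : Type) [AddCommGroup A] [Module (MonoidAlgebra ℤ G) A] [Finite A] :
    AddGroup.FG (extZG G i A) :=
  stmt3_general ℤ i h1 h2 (ModuleCat.of (MonoidAlgebra ℤ G) A)
end

section
/- Let G be a group such that H^i(G, ZG) = 0 for all i ≤ n, and let A be a ZG-module whose underlying abelian group is finitely generated. Then Ext^i_{ZG}(A, ZG) = 0 for all i ≤ n. -/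
open CategoryTheory Opposite

/-!
Vanishing of `Ext(A, k[G])` is first studied for `A` finitely generated and projective over the
coefficient ring `k`. There `Ext(A, k[G]) = Ext(k, Hom_k(A, k[G]))`, and `φ ↦ ∑ g, [φ (g • ·)]_g g`,
with `[·]_g` the coefficient at `g`, identifies `Hom_k(A, k[G])` with `Hom_k(A₀, k[G])`, where `A₀`
is `A` with trivial action. So the vanishing depends only on the `k`-module `A`, a direct summand
of some `k ^ m`, and follows from the vanishing of `Ext(k, k[G]) = H(G, k[G])`.

Let now `k` be a Dedekind domain whose quotients by nonzero ideals are finite, such as `ℤ`. A finite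
module `T` is a quotient of the permutation module on the set `T`, and the kernel is again finitely
generated and projective. A finitely generated module is an extension of its torsion-free quotient,
which is projective, by its torsion submodule, which is finite. The long exact sequences conclude.
-/

open Limits MonoidalCategory

universe w v v' u u'

section Preadditive

variable {C : Type u} [Category.{v} C] [Preadditive C] {D : Type u'} [Category.{v'} D]
  [Preadditive D]

/-- Exactness in degree `n` of the cochain complex `Hom(K, Y)`. As `n - 1 = n` and `K.d 0 0 = 0`
for `n = 0`, in degree zero this says that `0` is the only cocycle. -/
def HomExactAt (K : ChainComplex C ℕ) (Y : C) (n : ℕ) : Prop :=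
  ∀ f : K.X n ⟶ Y, K.d (n + 1) n ≫ f = 0 → ∃ g : K.X (n - 1) ⟶ Y, K.d n (n - 1) ≫ g = f

lemma homExactAt_zero_iff {K : ChainComplex C ℕ} {Y : C} :
    HomExactAt K Y 0 ↔ ∀ f : K.X 0 ⟶ Y, K.d 1 0 ≫ f = 0 → f = 0 := by
  simp [HomExactAt, eq_comm]

lemma homExactAt_map_iff {F : C ⥤ D} {G : D ⥤ C} [F.Additive] (adj : F ⊣ G)
    (K : ChainComplex C ℕ) (Y : D) (n : ℕ) :
    HomExactAt ((F.mapHomologicalComplex _).obj K) Y n ↔ HomExactAt K (G.obj Y) n := by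
  have := adj.right_adjoint_additive
  have comp_homEquiv_eq_iff {i j : ℕ} (a : F.obj (K.X j) ⟶ Y) (b : F.obj (K.X i) ⟶ Y) :
      K.d i j ≫ adj.homEquiv _ _ a = adj.homEquiv _ _ b ↔ F.map (K.d i j) ≫ a = b := by
    rw [← adj.homEquiv_naturality_left, (adj.homEquiv _ _).apply_eq_iff_eq]
  have homEquiv_zero (i : ℕ) : adj.homEquiv (K.X i) Y 0 = 0 := by simp [Adjunction.homEquiv_unit]
  refine (adj.homEquiv (K.X n) Y).forall_congr fun f ↦ imp_congr ?_ ?_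
  · rw [← homEquiv_zero, comp_homEquiv_eq_iff]
    rfl
  · refine (adj.homEquiv (K.X (n - 1)) Y).exists_congr fun g ↦ ?_
    rw [comp_homEquiv_eq_iff]
    rfl

end Preadditive

section Abelian

variable {C : Type u} [Category.{v} C] [Abelian C] {D : Type u'} [Category.{v'} D] [Abelian D]

lemma subsingleton_ext_obj_iff_homExactAt [EnoughProjectives C] (R : Type*) [Ring R] [Linear R C]
    {X : C} (P : ProjectiveResolution X) (Y : C) (n : ℕ) :
    Subsingleton (((Ext R C n).obj (op X)).obj Y) ↔ HomExactAt P.complex Y n := by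
  have subsingleton_iff_isZero : Subsingleton (((Ext R C n).obj (op X)).obj Y) ↔
      IsZero ((P.complex.linearYonedaObj R Y).homology n) :=
    ModuleCat.isZero_iff_subsingleton.symm.trans (P.isoExt n Y).isZero_iff
  rw [subsingleton_iff_isZero, ← HomologicalComplex.exactAt_iff_isZero_homology,
    HomologicalComplex.exactAt_iff' _ (n - 1) n (n + 1) (by cases n <;> simp) (by simp),
    ShortComplex.moduleCat_exact_iff]
  rfl

lemma subsingleton_hom_iff_homExactAt {X : C} (P : ProjectiveResolution X) (Y : C) :
    Subsingleton (X ⟶ Y) ↔ HomExactAt P.complex Y 0 := by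
  let π : P.complex.X 0 ⟶ X := P.π.f 0
  have : Epi π := inferInstanceAs (Epi (P.π.f 0))
  have d_comp_π : P.complex.d 1 0 ≫ π = 0 := P.complex_d_comp_π_f_zero
  rw [homExactAt_zero_iff]
  refine ⟨fun _ f hf ↦ ?_, fun h ↦ subsingleton_of_forall_eq 0 fun e ↦ ?_⟩
  · obtain ⟨e : X ⟶ Y, he : π ≫ e = f⟩ :=
      CokernelCofork.IsColimit.desc' P.isColimitCokernelCofork f hf
    rw [← he, Subsingleton.elim e 0, comp_zero]
  · rw [← cancel_epi π, h (π ≫ e) (by rw [reassoc_of% d_comp_π, zero_comp]), comp_zero]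

variable [HasExt.{w} C]

lemma subsingleton_ext_iff_homExactAt {X : C} (P : ProjectiveResolution X) (Y : C) (n : ℕ) :
    Subsingleton (Abelian.Ext X Y n) ↔ HomExactAt P.complex Y n := by
  cases n with
  | zero =>
    rw [Abelian.Ext.homEquiv₀.subsingleton_congr, subsingleton_hom_iff_homExactAt P]
  | succ n =>
    refine ⟨fun _ f hf ↦ (P.extMk_eq_zero_iff f _ rfl hf n rfl).1 (Subsingleton.elim _ _),
      fun h ↦ subsingleton_of_forall_eq 0 fun e ↦ ?_⟩
    obtain ⟨f, hf, rfl⟩ := P.extMk_surjective e _ rfl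
    exact (P.extMk_eq_zero_iff f _ rfl hf n rfl).2 (h f hf)

lemma subsingleton_ext_obj_iff_subsingleton_ext [EnoughProjectives C] (R : Type*) [Ring R]
    [Linear R C] (X Y : C) (n : ℕ) :
    Subsingleton (((Ext R C n).obj (op X)).obj Y) ↔ Subsingleton (Abelian.Ext X Y n) :=
  (subsingleton_ext_obj_iff_homExactAt R (projectiveResolution X) Y n).trans
    (subsingleton_ext_iff_homExactAt _ Y n).symm

lemma subsingleton_ext_adj_iff [HasExt.{w} D] [EnoughProjectives C] {F : C ⥤ D} {G : D ⥤ C}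
    (adj : F ⊣ G) [F.Additive] [F.PreservesHomology] [G.PreservesEpimorphisms]
    (X : C) (Y : D) (n : ℕ) :
    Subsingleton (Abelian.Ext (F.obj X) Y n) ↔ Subsingleton (Abelian.Ext X (G.obj Y) n) := by
  have := F.preservesProjectiveObjects_of_adjunction_of_preservesEpimorphisms adj
  let P := projectiveResolution X
  rw [subsingleton_ext_iff_homExactAt (F.mapProjectiveResolution P),
    subsingleton_ext_iff_homExactAt P]
  exact homExactAt_map_iff adj P.complex Y n

lemma subsingleton_ext_congr {X X' Y Y' : C} (e : X ≅ X') (e' : Y ≅ Y') (n : ℕ) :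
    Subsingleton (Abelian.Ext X Y n) ↔ Subsingleton (Abelian.Ext X' Y' n) :=
  (((Abelian.extFunctor n).mapIso e.symm.op).app Y ≪≫ ((Abelian.extFunctor n).obj (op X')).mapIso e'
    ).addCommGroupIsoToAddEquiv.toEquiv.subsingleton_congr

lemma subsingleton_ext_of_sum_comp_eq_id {X X' : C} {ι : Type*} [Fintype ι] {p : ι → (X ⟶ X')}
    {i : ι → (X' ⟶ X)} (hpi : ∑ j, p j ≫ i j = 𝟙 X) {Y : C} {n : ℕ}
    (h : Subsingleton (Abelian.Ext X' Y n)) : Subsingleton (Abelian.Ext X Y n) := by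
  refine subsingleton_of_forall_eq 0 fun x ↦ ?_
  calc x = (Abelian.Ext.mk₀ (∑ j, p j ≫ i j)).comp x (zero_add n) := by
        rw [hpi, Abelian.Ext.mk₀_id_comp]
    _ = ∑ j, (Abelian.Ext.mk₀ (p j)).comp ((Abelian.Ext.mk₀ (i j)).comp x (zero_add n))
          (zero_add n) := by
        simp only [Abelian.Ext.mk₀_sum, Abelian.Ext.sum_comp, Abelian.Ext.mk₀_comp_mk₀_assoc]
    _ = 0 := Finset.sum_eq_zero fun j _ ↦ by
        rw [Subsingleton.elim ((Abelian.Ext.mk₀ (i j)).comp x _) 0, Abelian.Ext.comp_zero]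

lemma subsingleton_ext_X₂_of_shortExact {S : ShortComplex C} (hS : S.ShortExact) {Y : C} {n : ℕ}
    (h₁ : Subsingleton (Abelian.Ext S.X₁ Y n)) (h₃ : Subsingleton (Abelian.Ext S.X₃ Y n)) :
    Subsingleton (Abelian.Ext S.X₂ Y n) := by
  refine subsingleton_of_forall_eq 0 fun x ↦ ?_
  obtain ⟨y, rfl⟩ := Abelian.Ext.contravariant_sequence_exact₂ hS Y x (Subsingleton.elim _ _)
  rw [Subsingleton.elim y 0, Abelian.Ext.comp_zero]

lemma subsingleton_ext_X₃_of_shortExact {S : ShortComplex C} (hS : S.ShortExact) {Y : C} {n : ℕ}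
    (h₁ : ∀ i < n, Subsingleton (Abelian.Ext S.X₁ Y i))
    (h₂ : Subsingleton (Abelian.Ext S.X₂ Y n)) :
    Subsingleton (Abelian.Ext S.X₃ Y n) := by
  refine subsingleton_of_forall_eq 0 fun x ↦ ?_
  cases n with
  | zero =>
    have := hS.epi_g
    exact Abelian.Ext.precomp_mk₀_injective_of_epi Y S.g (Subsingleton.elim _ _)
  | succ n =>
    have := h₁ n n.lt_succ_self
    obtain ⟨y, rfl⟩ := Abelian.Ext.contravariant_sequence_exact₃ hS Y x (Subsingleton.elim _ _)
      (add_comm 1 n)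
    rw [Subsingleton.elim y 0, Abelian.Ext.comp_zero]

end Abelian

section Untwisting

variable {k G : Type*} [CommRing k]

lemma finite_setOf_exists_coeff_ne_zero {B : Type*} [AddCommGroup B] [Module k B]
    [Module.Finite k B] (φ : B →ₗ[k] MonoidAlgebra k G) :
    {g | ∃ b, (φ b).coeff g ≠ 0}.Finite := by
  obtain ⟨S, hS⟩ := Module.Finite.fg_top (R := k) (M := B)
  refine (S.finite_toSet.biUnion fun s _ ↦ (φ s).coeff.support.finite_toSet).subset ?_
  rintro g ⟨b, hb⟩
  by_contra hg
  simp only [Set.mem_iUnion, not_exists, SetLike.mem_coe, Finsupp.mem_support_iff, not_not] at hg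
  have coeff_comp_eq_zero :
      Finsupp.lapply g ∘ₗ (MonoidAlgebra.coeffLinearEquiv k).toLinearMap ∘ₗ φ = 0 :=
    LinearMap.ext_on hS fun s hs ↦ hg s hs
  exact hb (LinearMap.congr_fun coeff_comp_eq_zero b)

variable {A B : Type*} [AddCommGroup A] [Module k A] [AddCommGroup B] [Module k B]
    [Module.Finite k B]

/-- A family of linear maps `u g : A → B` acts on the linear maps `φ : B → k[G]` by precomposing
the coefficient of `φ` at `g` with `u g`. As `B` is finitely generated, `φ` has only finitely many
nonzero coefficients, so the result takes values in `k[G]`. -/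
noncomputable def coeffwisePrecomp (u : G → A →ₗ[k] B) :
    (B →ₗ[k] MonoidAlgebra k G) →ₗ[k] (A →ₗ[k] MonoidAlgebra k G) where
  toFun φ :=
    { toFun a := .ofCoeff <| Finsupp.ofSupportFinite (fun g ↦ (φ (u g a)).coeff g) <|
        (finite_setOf_exists_coeff_ne_zero φ).subset fun g hg ↦ ⟨u g a, hg⟩
      map_add' a b := by ext; simp [Finsupp.ofSupportFinite_coe]
      map_smul' r a := by ext; simp [Finsupp.ofSupportFinite_coe] }
  map_add' φ ψ := by ext; simp [Finsupp.ofSupportFinite_coe]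
  map_smul' r φ := by ext; simp [Finsupp.ofSupportFinite_coe]

@[simp]
lemma coeff_coeffwisePrecomp_apply (u : G → A →ₗ[k] B) (φ : B →ₗ[k] MonoidAlgebra k G) (a : A)
    (g : G) : (coeffwisePrecomp u φ a).coeff g = (φ (u g a)).coeff g := rfl

lemma coeffwisePrecomp_comp_of_comp_eq_id [Module.Finite k A] {u : G → A →ₗ[k] B}
    {v : G → B →ₗ[k] A} (h : ∀ g, u g ∘ₗ v g = .id) :
    coeffwisePrecomp v ∘ₗ coeffwisePrecomp u = .id := by
  ext φ b g
  simpa using congr(φ ($(h g) b) |>.coeff g)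

/-- The untwisting isomorphism sends `φ : V → k[G]` to the map whose coefficient at `g` is that of
`φ ∘ ρ g`. It trades the action of `G` on `V` for the trivial one. -/
noncomputable def untwist [Group G] {V : Type*} [AddCommGroup V] [Module k V] [Module.Finite k V]
    (ρ : Representation k G V) :
    (ρ.linHom (Representation.ofMulAction k G G)).Equiv
      ((Representation.trivial k G V).linHom (Representation.ofMulAction k G G)) :=
  .mk
    (.ofLinearMap (coeffwisePrecomp fun g ↦ ρ g) (coeffwisePrecomp fun g ↦ ρ g⁻¹)
      (coeffwisePrecomp_comp_of_comp_eq_id fun g ↦ by ext; simp)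
      (coeffwisePrecomp_comp_of_comp_eq_id fun g ↦ by ext; simp))
    fun h ↦ by
      ext φ v g
      simp [Representation.coeff_ofMulAction]

end Untwisting

section Projective

variable {k G : Type u} [CommRing k] [Group G]

instance : HasExt.{u} (Rep.{u} k G) := hasExt_of_enoughProjectives _

instance (A : Rep.{u} k G) : (tensorLeft A).Additive where

instance preservesHomology_tensorLeft (A : Rep.{u} k G) [Module.Flat k A.V] :
    (tensorLeft A).PreservesHomology := by
  have : (tensorLeft A).PreservesMonomorphisms := ⟨fun f hf ↦ by
    rw [Rep.mono_iff_injective] at hf ⊢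
    exact Module.Flat.lTensor_preserves_injective_linearMap (M := A.V) f.hom.toLinearMap hf⟩
  have : (tensorLeft A).IsLeftAdjoint := (ihom.adjunction A).isLeftAdjoint
  exact Functor.preservesHomology_of_preservesMonos_and_cokernels _

instance preservesEpimorphisms_ihom (A : Rep.{u} k G) [Module.Projective k A.V] :
    (ihom A).PreservesEpimorphisms where
  preserves {X Y} f hf := by
    rw [Rep.epi_iff_surjective] at hf ⊢
    exact fun φ : A.V →ₗ[k] Y.V ↦ Module.projective_lifting_property f.hom.toLinearMap φ hf

lemma subsingleton_ext_iff_ihom (A : Rep.{u} k G) [Module.Projective k A.V] (Y : Rep.{u} k G)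
    (n : ℕ) :
    Subsingleton (Abelian.Ext A Y n) ↔
      Subsingleton (Abelian.Ext (𝟙_ (Rep.{u} k G)) ((ihom A).obj Y) n) :=
  (subsingleton_ext_congr (ρ_ A).symm (Iso.refl Y) n).trans
    (subsingleton_ext_adj_iff (ihom.adjunction A) _ Y n)

lemma subsingleton_ext_ofMulAction_iff_trivial (A : Rep.{u} k G) [Module.Finite k A.V]
    [Module.Projective k A.V] (n : ℕ) :
    Subsingleton (Abelian.Ext A (Rep.ofMulAction k G G) n) ↔
      Subsingleton (Abelian.Ext (Rep.trivial k G A.V) (Rep.ofMulAction k G G) n) := by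
  let untwistIso : (ihom A).obj (Rep.ofMulAction k G G) ≅
      (ihom (Rep.trivial k G A.V)).obj (Rep.ofMulAction k G G) := Rep.mkIso (untwist A.ρ)
  rw [subsingleton_ext_iff_ihom, subsingleton_ext_iff_ihom (Rep.trivial k G A.V)]
  exact subsingleton_ext_congr (Iso.refl _) untwistIso n

instance : (Rep.trivialFunctor.{u} k G).Additive where

lemma subsingleton_ext_trivial {Y : Rep.{u} k G} {n : ℕ}
    (h : Subsingleton (Abelian.Ext (Rep.trivial k G k) Y n)) (V : Type u) [AddCommGroup V]
    [Module k V] [Module.Finite k V] [Module.Projective k V] :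
    Subsingleton (Abelian.Ext (Rep.trivial k G V) Y n) := by
  obtain ⟨m, π, ι, -, -, π_comp_ι⟩ := Module.Finite.exists_comp_eq_id_of_projective k V
  let p (j : Fin m) : ModuleCat.of k V ⟶ ModuleCat.of k k :=
    ModuleCat.ofHom (LinearMap.proj j ∘ₗ ι)
  let i (j : Fin m) : ModuleCat.of k k ⟶ ModuleCat.of k V :=
    ModuleCat.ofHom (π ∘ₗ LinearMap.single k (fun _ ↦ k) j)
  have sum_comp : ∑ j, p j ≫ i j = 𝟙 (ModuleCat.of k V) := by
    ext v
    simpa [p, i, ModuleCat.hom_sum, LinearMap.sum_apply, ← map_sum, Finset.univ_sum_single]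
      using congr($π_comp_ι v)
  refine subsingleton_ext_of_sum_comp_eq_id (p := fun j ↦ (Rep.trivialFunctor k G).map (p j))
    (i := fun j ↦ (Rep.trivialFunctor k G).map (i j)) ?_ h
  simp only [← Functor.map_comp, ← Functor.map_sum, sum_comp, CategoryTheory.Functor.map_id]

lemma subsingleton_ext_ofMulAction_of_projective {n : ℕ}
    (h : Subsingleton (Abelian.Ext (Rep.trivial k G k) (Rep.ofMulAction k G G) n))
    (A : Rep.{u} k G) [Module.Finite k A.V] [Module.Projective k A.V] :
    Subsingleton (Abelian.Ext A (Rep.ofMulAction k G G) n) :=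
  (subsingleton_ext_ofMulAction_iff_trivial A n).2 (subsingleton_ext_trivial h A.V)

end Projective

section Devissage

lemma projective_of_isTorsionFree (k V : Type*) [CommRing k] [IsDedekindDomain k]
    [AddCommGroup V] [Module k V] [Module.Finite k V] [Module.IsTorsionFree k V] :
    Module.Projective k V :=
  have := Module.finitePresentation_of_finite k V
  Module.Flat.projective_of_finitePresentation

lemma torsion_le_comap_torsion {k V W : Type*} [CommSemiring k] [AddCommMonoid V] [Module k V]
    [AddCommMonoid W] [Module k W] (f : V →ₗ[k] W) :
    Submodule.torsion k V ≤ (Submodule.torsion k W).comap f := by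
  rintro v ⟨a, ha : (a : k) • v = 0⟩
  exact ⟨a, show (a : k) • f v = 0 by rw [← map_smul, ha, map_zero]⟩

lemma finite_of_isTorsion (k V : Type*) [CommRing k] [Nontrivial k] [Ring.HasFiniteQuotients k]
    [AddCommGroup V] [Module k V] [Module.Finite k V] (hV : Module.IsTorsion k V) : Finite V := by
  let I := (⊤ : Submodule k V).annihilator
  have I_ne_bot : I ≠ ⊥ := by
    obtain ⟨r, hr, r_mem⟩ := Submodule.annihilator_top_inter_nonZeroDivisors hV
    exact (Submodule.ne_bot_iff _).2 ⟨r, hr, nonZeroDivisors.ne_zero r_mem⟩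
  have hI : Module.IsTorsionBySet k V I := fun v r ↦ Submodule.mem_annihilator.1 r.2 v trivial
  let : Module (k ⧸ I) V := hI.module
  have : IsScalarTower k (k ⧸ I) V := hI.isScalarTower
  have : Module.Finite (k ⧸ I) V := .of_restrictScalars_finite k _ V
  have : Finite (k ⧸ I) := Ring.HasFiniteQuotients.finiteQuotient I_ne_bot
  exact Module.finite_of_finite (k ⧸ I)

variable {k G : Type u} [CommRing k] [Group G]

lemma exists_epi_free_of_finite (T : Rep.{u} k G) [Finite T.V] :
    ∃ (P : Rep.{u} k G) (π : P ⟶ T), Epi π ∧ Module.Finite k P.V ∧ Module.Free k P.V := by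
  let : MulAction G T.V := MulAction.compHom T.V T.ρ
  have smul_def (g : G) (t : T.V) : g • t = T.ρ g t := rfl
  let π : (Representation.ofMulAction k G T.V).IntertwiningMap T.ρ :=
    ⟨Finsupp.linearCombination k id ∘ₗ (MonoidAlgebra.coeffLinearEquiv k).toLinearMap, fun g ↦ by
      ext t
      simp [smul_def]⟩
  refine ⟨Rep.ofMulAction k G T.V, Rep.ofHom (σ := T.ρ) π, ?_, ?_, ?_⟩
  · rw [Rep.epi_iff_surjective]
    exact fun t ↦ ⟨MonoidAlgebra.single t 1, by simp [π]⟩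
  · exact .of_surjective _ (MonoidAlgebra.coeffLinearEquiv k (M := T.V)).symm.surjective
  · exact .of_equiv (MonoidAlgebra.coeffLinearEquiv k (M := T.V)).symm

lemma injective_kernel_ι {A B : Rep.{u} k G} (f : A ⟶ B) :
    Function.Injective (kernel.ι f).hom.toLinearMap :=
  (Rep.mono_iff_injective (kernel.ι f)).1 inferInstance

lemma shortExact_kernel_s7 {A B : Rep.{u} k G} (f : A ⟶ B) [Epi f] :
    (ShortComplex.mk (kernel.ι f) f (kernel.condition f)).ShortExact :=
  .mk' (ShortComplex.exact_kernel f) inferInstance inferInstance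

variable [IsDedekindDomain k] {n : ℕ}

lemma subsingleton_ext_ofMulAction_of_finite
    (h : ∀ i ≤ n, Subsingleton (Abelian.Ext (Rep.trivial k G k) (Rep.ofMulAction k G G) i))
    (T : Rep.{u} k G) [Finite T.V] :
    Subsingleton (Abelian.Ext T (Rep.ofMulAction k G G) n) := by
  obtain ⟨P, π, _, _, _⟩ := exists_epi_free_of_finite T
  have : Module.Finite k (kernel π).V := .of_injective _ (injective_kernel_ι π)
  have : Module.IsTorsionFree k (kernel π).V :=
    (injective_kernel_ι π).moduleIsTorsionFree _ (map_smul _)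
  have : Module.Projective k (kernel π).V := projective_of_isTorsionFree k _
  exact subsingleton_ext_X₃_of_shortExact (shortExact_kernel_s7 π)
    (fun i hi ↦ subsingleton_ext_ofMulAction_of_projective (h i hi.le) _)
    (subsingleton_ext_ofMulAction_of_projective (h n le_rfl) P)

lemma subsingleton_ext_ofMulAction_of_module_finite [Ring.HasFiniteQuotients k]
    (h : ∀ i ≤ n, Subsingleton (Abelian.Ext (Rep.trivial k G k) (Rep.ofMulAction k G G) i))
    (X : Rep.{u} k G) [Module.Finite k X.V] :
    Subsingleton (Abelian.Ext X (Rep.ofMulAction k G G) n) := by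
  let W := Submodule.torsion k X.V
  let π := X.mkQ W fun g ↦ torsion_le_comap_torsion (X.ρ g)
  have : Epi π := (Rep.epi_iff_surjective π).2 (Submodule.mkQ_surjective W)
  have ι_mem_torsion (x : (kernel π).V) : (kernel.ι π).hom x ∈ W :=
    (Submodule.Quotient.mk_eq_zero W).1 congr(($(kernel.condition π)).hom x)
  have : Finite W := finite_of_isTorsion k W Submodule.torsion_isTorsion
  have : Finite (kernel π).V := .of_injective (fun x ↦ (⟨_, ι_mem_torsion x⟩ : W))
    fun x y hxy ↦ injective_kernel_ι π congr(($hxy).1)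
  have : Module.Projective k (X.V ⧸ W) := projective_of_isTorsionFree k _
  exact subsingleton_ext_X₂_of_shortExact (shortExact_kernel_s7 π)
    (subsingleton_ext_ofMulAction_of_finite h _)
    (subsingleton_ext_ofMulAction_of_projective (h n le_rfl) _)

end Devissage

section GroupRing

variable {k G : Type u} [CommRing k] [Group G]

lemma subsingleton_groupCohomology_iff (Y : Rep.{u} k G) (n : ℕ) :
    Subsingleton (groupCohomology Y n) ↔ Subsingleton (Abelian.Ext (Rep.trivial k G k) Y n) :=
  (groupCohomologyIsoExt Y n).toLinearEquiv.toEquiv.subsingleton_congr.trans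
    (subsingleton_ext_obj_iff_subsingleton_ext k _ Y n)

instance : HasExt.{u} (ModuleCat.{u} (MonoidAlgebra k G)) := hasExt_of_enoughProjectives _

instance : (Rep.ofModuleMonoidAlgebra.{u} (k := k) (G := G)).Additive where

/-- The representation of `G` on the group ring by left translation corresponds to the group ring
as a left module over itself. -/
noncomputable def toModuleOfMulActionIso :
    Rep.toModuleMonoidAlgebra.obj (Rep.ofMulAction k G G) ≅ ModuleCat.of _ (MonoidAlgebra k G) :=
  (Representation.ofMulActionSelfAsModuleEquiv (k := k) (G := G)).toModuleIso

lemma subsingleton_ext_monoidAlgebra_iff (A : ModuleCat.{u} (MonoidAlgebra k G)) (n : ℕ) :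
    Subsingleton (Abelian.Ext A (ModuleCat.of _ (MonoidAlgebra k G)) n) ↔
      Subsingleton (Abelian.Ext (Rep.ofModuleMonoidAlgebra.obj A) (Rep.ofMulAction k G G) n) := by
  let adj : Rep.ofModuleMonoidAlgebra (k := k) (G := G) ⊣ Rep.toModuleMonoidAlgebra :=
    Rep.equivalenceModuleMonoidAlgebra.symm.toAdjunction
  refine (subsingleton_ext_congr (Iso.refl A) toModuleOfMulActionIso.symm n).trans ?_
  exact (subsingleton_ext_adj_iff adj A (Rep.ofMulAction k G G) n).symm

lemma module_finite_ofModuleMonoidAlgebra (A : Type u) [AddCommGroup A] [Module k A]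
    [Module (MonoidAlgebra k G) A] [IsScalarTower k (MonoidAlgebra k G) A] [Module.Finite k A] :
    Module.Finite k (Rep.ofModuleMonoidAlgebra.obj (ModuleCat.of (MonoidAlgebra k G) A)).V := by
  let e : A ≃ₗ[k] RestrictScalars k (MonoidAlgebra k G) A :=
    { (RestrictScalars.addEquiv k (MonoidAlgebra k G) A).symm with
      map_smul' r a := by
        rw [← algebraMap_smul (MonoidAlgebra k G) r a]
        exact RestrictScalars.addEquiv_symm_map_algebraMap_smul .. }
  exact .equiv e

end GroupRing

theorem stmt7_general {k G : Type u} [CommRing k] [IsDedekindDomain k] [Ring.HasFiniteQuotients k]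
    [Group G] (n : ℕ) (hG : ∀ i ≤ n, Subsingleton (groupCohomology (Rep.ofMulAction k G G) i))
    (A : Type u) [AddCommGroup A] [Module k A] [Module (MonoidAlgebra k G) A]
    [IsScalarTower k (MonoidAlgebra k G) A] [Module.Finite k A] :
    ∀ i ≤ n, Subsingleton (((Ext ℤ (ModuleCat (MonoidAlgebra k G)) i).obj
      (op (ModuleCat.of (MonoidAlgebra k G) A))).obj
      (ModuleCat.of (MonoidAlgebra k G) (MonoidAlgebra k G))) := by
  intro i hi
  have := module_finite_ofModuleMonoidAlgebra (k := k) (G := G) A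
  rw [subsingleton_ext_obj_iff_subsingleton_ext, subsingleton_ext_monoidAlgebra_iff]
  exact subsingleton_ext_ofMulAction_of_module_finite
    (fun j hj ↦ (subsingleton_groupCohomology_iff _ j).1 (hG j (hj.trans hi))) _

/-- If `H^i(G, ℤG) = 0` for all `i ≤ n` and `A` is a `ℤG`-module that is finitely generated
as an abelian group, then `Ext^i_{ℤG}(A, ℤG) = 0` for all `i ≤ n`. -/
theorem stmt7 (G : Type) [Group G] (n : ℕ)
    (hG : ∀ i ≤ n, Subsingleton (groupCohomology (Rep.ofMulAction ℤ G G) i))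
    (A : Type) [AddCommGroup A] [Module (MonoidAlgebra ℤ G) A]
    (hA : AddGroup.FG A) :
    ∀ i ≤ n, Subsingleton (extZG G i A) :=
  have : Module.Finite ℤ A := Module.Finite.iff_addGroup_fg.2 hA
  stmt7_general n hG A
end
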